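/- Let (σ,α) be a collection of maps, i.e. a collection of hypermaps on {1,…,n} in which every cycle of α has length at most 2. Then for every refinement β ≤ α one has μ(β,α) = (−1)^{z(β)−z(α)}, and the characteristic polynomial satisfies χ(σ,α;t) = Σ_{β≤α} (−1)^{n−z(β)} · t^{κ(σ,β)−κ(σ,α)} = (−1)^{z(σ)−κ(σ,α)} · R(σ,α;−t,−1). -/

import Mathlib

/-!
For an involution `α`, a permutation `β` refines `α` exactly when `β x ∈ {x, α x}` for all `x`
(`isRefinement_iff`), so the interval `[β, α]` is a Boolean lattice on the `2`-cycles of `α` that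
`β` does not use.  Multiplying by one such `2`-cycle is a sign-reversing involution of the interval,
so `∑ sign c = 0` unless `β = α` (`sum_sign_interval`), and the recurrence for the Möbius function
forces `μ(β, α) = sign β * sign α`.

Everything else concerns building an involution one `2`-cycle at a time.  Joining two fixed points
`x`, `y` of `c` by `swap x y` lowers `z(c)` by exactly one and lowers `κ(σ, c)` by at most one: both
are numbers of classes of orbit relations, and the new relation is contained in the one obtained
from the old by gluing the classes of `x` and `y` (`glue`).  By induction (`involution_facts`)
`sign c = (-1)^(n + z(c))`, and `z(c) + z(σ) ≤ κ(σ, c) + n`.  The latter, together with the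
monotonicity of `z` and `κ`, shows that no exponent in the statement is truncated, and comparing
parities of exponents finishes the proof.
-/

open scoped Classical

namespace Hypermap

variable {γ : Type*} [Fintype γ] [DecidableEq γ]

/-- The number of cycles of a permutation, counting fixed points as cycles. -/
noncomputable def zc (π : Equiv.Perm γ) : ℕ :=
  Nat.card (MulAction.orbitRel.Quotient (Subgroup.zpowers π) γ)

/-- The number of connected components of the collection of hypermaps `(σ, α)`. -/
noncomputable def kappa (σ α : Equiv.Perm γ) : ℕ :=
  Nat.card (MulAction.orbitRel.Quotient
    (Subgroup.closure ({σ, α} : Set (Equiv.Perm γ))) γ)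

/-- The support of the cycle of `π` containing `x`. -/
def cycleSet (π : Equiv.Perm γ) (x : γ) : Set γ := {y | π.SameCycle x y}

/-- The number of cycles of `π` meeting the set `S` (for invariant `S`,
the number of cycles of the restriction of `π` to `S`). -/
noncomputable def zcOn (π : Equiv.Perm γ) (S : Set γ) : ℕ :=
  (S.image fun x =>
    Quotient.mk (MulAction.orbitRel (Subgroup.zpowers π) γ) x).ncard

/-- `β` is a refinement of `α`: the support of every cycle of `α` is
`β`-invariant, and on the support `S` of each cycle of `α` the restriction
`βᵢ` of `β` satisfies the genus-zero condition `|S| + 1 = z(βᵢ) + z(βᵢ⁻¹αᵢ)`. -/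
def IsRefinement (β α : Equiv.Perm γ) : Prop :=
  (∀ x, α.SameCycle x (β x)) ∧
  ∀ x, Nat.card (cycleSet α x) + 1 =
    zcOn β (cycleSet α x) + zcOn (β⁻¹ * α) (cycleSet α x)

/-- The Whitney polynomial of a collection of hypermaps. -/
noncomputable def whitney {A : Type*} [CommRing A] (σ α : Equiv.Perm γ) (u v : A) : A :=
  ∑ β ∈ Finset.univ.filter (fun β => IsRefinement β α),
    u ^ (kappa σ β - kappa σ α) *
      v ^ (kappa σ β + Fintype.card γ - zc β - zc σ)

end Hypermap

namespace Hypermap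

variable {γ : Type*} [Fintype γ] [DecidableEq γ]

/-- The interval `[a, b]` in the partial order of refinements. -/
noncomputable def refInterval (a b : Equiv.Perm γ) : Finset (Equiv.Perm γ) :=
  Finset.univ.filter (fun c => IsRefinement a c ∧ IsRefinement c b)

/-- `mu` is the Möbius function of the refinement order: it satisfies the
defining recurrence `Σ_{a ≤ c ≤ b} μ(a,c) = δ_{a,b}` on every interval. -/
def IsMobius (mu : Equiv.Perm γ → Equiv.Perm γ → ℤ) : Prop :=
  ∀ a b : Equiv.Perm γ, IsRefinement a b →
    ∑ c ∈ refInterval a b, mu a c = if a = b then 1 else 0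

end Hypermap

namespace Hypermap

open Equiv

set_option linter.unusedSectionVars false

/-! ### Counting classes of orbit relations -/

/-- The number of orbits of the group generated by `S`; both `zc` and `kappa` are of this form. -/
noncomputable def orbitCount {γ : Type*} (S : Set (Perm γ)) : ℕ :=
  Nat.card (MulAction.orbitRel.Quotient (Subgroup.closure S) γ)

/-- The orbit relation of the group generated by `S`. -/
def orbitSetoid {γ : Type*} (S : Set (Perm γ)) : Setoid γ :=
  MulAction.orbitRel (Subgroup.closure S) γ

section

variable {γ : Type*}

lemma orbitSetoid_step {S : Set (Perm γ)} {g : Perm γ} (hg : g ∈ S) (a : γ) :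
    orbitSetoid S a (g a) := by
  refine Setoid.symm' _ ?_
  exact ⟨⟨g, Subgroup.subset_closure hg⟩, rfl⟩

/-- The orbit relation is the smallest equivalence relation relating `a` to `g a` for all
generators `g`. -/
lemma orbitSetoid_le {S : Set (Perm γ)} {r : Setoid γ} (h : ∀ g ∈ S, ∀ a, r a (g a)) :
    orbitSetoid S ≤ r := by
  have key : ∀ g ∈ Subgroup.closure S, ∀ a, r a (g a) := by
    intro g hg
    induction hg using Subgroup.closure_induction with
    | mem g hg => exact h g hg
    | one => exact fun a => r.refl' a
    | mul g k _ _ h1 h2 => exact fun a => r.trans' (h2 a) (h1 (k a))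
    | inv g _ h1 =>
      intro a
      have := h1 (g⁻¹ a)
      rw [show g (g⁻¹ a) = a from g.apply_symm_apply a] at this
      exact r.symm' this
  rintro a b ⟨g, hg⟩
  have := key g.1 g.2 b
  have e : g.1 b = a := hg
  rw [e] at this
  exact r.symm' this

/-- The equivalence relation obtained from `r` by merging the classes of `x` and `y`. -/
def glue (r : Setoid γ) (x y : γ) : Setoid γ where
  r a b := r a b ∨ ((r a x ∨ r a y) ∧ (r b x ∨ r b y))
  iseqv := by
    have hm : ∀ {a b}, r a b → (r b x ∨ r b y) → (r a x ∨ r a y) := fun h h' =>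
      h'.imp (r.trans' h) (r.trans' h)
    refine ⟨fun a => Or.inl (r.refl' a), ?_, ?_⟩
    · rintro a b (h | h)
      · exact Or.inl (r.symm' h)
      · exact Or.inr h.symm
    · rintro a b c (h1 | h1) (h2 | h2)
      · exact Or.inl (r.trans' h1 h2)
      · exact Or.inr ⟨hm h1 h2.1, h2.2⟩
      · exact Or.inr ⟨h1.1, hm (r.symm' h2) h1.2⟩
      · exact Or.inr ⟨h1.1, h2.2⟩

variable [Finite γ]

lemma card_quotient_le {r s : Setoid γ} (h : r ≤ s) :
    Nat.card (Quotient s) ≤ Nat.card (Quotient r) := by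
  refine Nat.card_le_card_of_surjective (Quotient.map' (s₁ := r) (s₂ := s) id fun a b hab => h hab) ?_
  rintro ⟨a⟩
  exact ⟨Quotient.mk r a, rfl⟩

lemma card_quotient_lt {r s : Setoid γ} (h : r ≤ s) {x y : γ} (hs : s x y) (hr : ¬ r x y) :
    Nat.card (Quotient s) < Nat.card (Quotient r) := by
  have := Fintype.ofFinite (Quotient r)
  have := Fintype.ofFinite (Quotient s)
  rw [Nat.card_eq_fintype_card, Nat.card_eq_fintype_card]
  refine Fintype.card_lt_of_surjective_not_injective
    (Quotient.map' (s₁ := r) (s₂ := s) id fun a b hab => h hab) ?_ ?_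
  · rintro ⟨a⟩
    exact ⟨Quotient.mk r a, rfl⟩
  · intro hinj
    have : Quotient.mk r x = Quotient.mk r y := hinj (Quotient.sound (s := s) hs)
    exact hr (Quotient.exact this)

lemma card_quotient_le_glue (r : Setoid γ) (x y : γ) :
    Nat.card (Quotient r) ≤ Nat.card (Quotient (glue r x y)) + 1 := by
  rw [← Finite.card_option]
  -- Only the class of `y` is collapsed to `none`; all other classes stay distinct after gluing.
  let f : Quotient r → Option (Quotient (glue r x y)) := fun q =>
    if q = Quotient.mk r y then none
    else some (Quotient.map' (s₁ := r) (s₂ := glue r x y) id (fun a b hab => Or.inl hab) q)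
  refine Nat.card_le_card_of_injective f ?_
  rintro ⟨a⟩ ⟨b⟩ hab
  change (if Quotient.mk r a = Quotient.mk r y then none
    else some (Quotient.mk (glue r x y) a)) = (if Quotient.mk r b = Quotient.mk r y then none
    else some (Quotient.mk (glue r x y) b)) at hab
  change Quotient.mk r a = Quotient.mk r b
  split_ifs at hab with h1 h2 h2
  · rw [h1, h2]
  · have h : glue r x y a b := Quotient.exact (Option.some.inj hab)
    have h1' : ¬ r a y := fun h => h1 (Quotient.sound h)
    have h2' : ¬ r b y := fun h => h2 (Quotient.sound h)
    rcases h with h | h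
    · exact Quotient.sound h
    · exact Quotient.sound (r.trans' (h.1.resolve_right h1') (r.symm' (h.2.resolve_right h2')))

lemma orbitCount_le {S T : Set (Perm γ)} (h : ∀ g ∈ S, ∀ a, orbitSetoid T a (g a)) :
    orbitCount T ≤ orbitCount S :=
  card_quotient_le (orbitSetoid_le h)

/-- Joining two fixed points of a generator by a transposition lowers the number of orbits by at
most one. -/
lemma orbitCount_mul_swap [DecidableEq γ] (S : Set (Perm γ)) (c : Perm γ) {x y : γ}
    (hx : c x = x) (hy : c y = y) :
    orbitCount (insert c S) ≤ orbitCount (insert (c * swap x y) S) + 1 := by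
  refine (card_quotient_le_glue (orbitSetoid (insert c S)) x y).trans
    (Nat.add_le_add_right (card_quotient_le (orbitSetoid_le ?_)) 1)
  rintro g (rfl | hg) a
  · by_cases hax : a = x
    · subst hax
      rw [Perm.mul_apply, swap_apply_left, hy]
      exact Or.inr ⟨Or.inl (Setoid.refl' _ _), Or.inr (Setoid.refl' _ _)⟩
    by_cases hay : a = y
    · subst hay
      rw [Perm.mul_apply, swap_apply_right, hx]
      exact Or.inr ⟨Or.inr (Setoid.refl' _ _), Or.inl (Setoid.refl' _ _)⟩
    rw [Perm.mul_apply, swap_apply_of_ne_of_ne hax hay]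
    exact Or.inl (orbitSetoid_step (Set.mem_insert _ _) a)
  · exact Or.inl (orbitSetoid_step (Set.mem_insert_of_mem _ hg) a)

end

variable {γ : Type*} [Fintype γ] [DecidableEq γ]

lemma zc_eq (π : Perm γ) : zc π = orbitCount {π} := by
  rw [zc, orbitCount, Subgroup.zpowers_eq_closure]

lemma kappa_eq (σ α : Perm γ) : kappa σ α = orbitCount {α, σ} := by
  rw [kappa, orbitCount, Set.pair_comm]

lemma zc_mul_swap (c : Perm γ) {x y : γ} (hx : c x = x) (hy : c y = y) (hxy : x ≠ y) :
    zc (c * swap x y) + 1 = zc c := by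
  have h1 : zc c ≤ zc (c * swap x y) + 1 := by
    have := orbitCount_mul_swap ∅ c hx hy
    simpa [zc_eq] using this
  have h2 : zc (c * swap x y) < zc c := by
    rw [zc_eq, zc_eq]
    refine card_quotient_lt (r := orbitSetoid {c}) (s := orbitSetoid {c * swap x y})
      (x := x) (y := y) (orbitSetoid_le ?_) ?_ ?_
    · rintro g rfl a
      by_cases hax : a = x
      · rw [hax, hx]
      by_cases hay : a = y
      · rw [hay, hy]
      have := orbitSetoid_step (Set.mem_singleton (g * swap x y)) a
      rwa [Perm.mul_apply, swap_apply_of_ne_of_ne hax hay] at this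
    · have := orbitSetoid_step (Set.mem_singleton (c * swap x y)) x
      rwa [Perm.mul_apply, swap_apply_left, hy] at this
    · -- The equivalence relation `a = x ↔ b = x` contains the orbit relation of `c`.
      intro h
      let r : Setoid γ := ⟨fun a b => a = x ↔ b = x, fun _ => Iff.rfl, Iff.symm, Iff.trans⟩
      have hle : orbitSetoid {c} ≤ r := by
        refine orbitSetoid_le ?_
        rintro g rfl a
        change a = x ↔ g a = x
        constructor
        · rintro rfl; exact hx
        · intro h; exact g.injective (h.trans hx.symm)
      have := (hle h : x = x ↔ y = x)
      exact hxy (this.1 rfl).symm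
  omega

lemma kappa_mul_swap (σ c : Perm γ) {x y : γ} (hx : c x = x) (hy : c y = y) :
    kappa σ c ≤ kappa σ (c * swap x y) + 1 := by
  rw [kappa_eq, kappa_eq]
  exact orbitCount_mul_swap {σ} c hx hy

lemma zc_one : zc (1 : Perm γ) = Fintype.card γ := by
  rw [zc_eq, ← Nat.card_eq_fintype_card]
  refine le_antisymm (Nat.card_le_card_of_surjective (Quotient.mk _) Quotient.mk_surjective) ?_
  refine Nat.card_le_card_of_injective (Quotient.mk (orbitSetoid {(1 : Perm γ)})) ?_
  intro a b h
  have hle : orbitSetoid {(1 : Perm γ)} ≤ ⊥ := by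
    refine orbitSetoid_le ?_
    rintro g rfl a
    rfl
  exact hle (Quotient.exact h)

lemma zc_le_card (π : Perm γ) : zc π ≤ Fintype.card γ := by
  rw [zc, ← Nat.card_eq_fintype_card]
  exact Nat.card_le_card_of_surjective (Quotient.mk _) Quotient.mk_surjective

lemma kappa_one (σ : Perm γ) : kappa σ 1 = zc σ := by
  rw [kappa_eq, zc_eq]
  refine le_antisymm (orbitCount_le ?_) (orbitCount_le ?_)
  · rintro g rfl a
    exact orbitSetoid_step (by simp) a
  · rintro g (rfl | rfl) a
    · exact Setoid.refl' _ _
    · exact orbitSetoid_step (by simp) a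

lemma kappa_le_zc (σ α : Perm γ) : kappa σ α ≤ zc σ := by
  rw [kappa_eq, zc_eq]
  refine orbitCount_le ?_
  rintro g rfl a
  exact orbitSetoid_step (by simp) a

/-! ### Involutions -/

lemma apply_apply_of_sq {α : Perm γ} (h : α * α = 1) (x : γ) : α (α x) = x := by
  rw [← Perm.mul_apply, h, Perm.one_apply]

/-- Sign and rank inequality for involutions: `sign c = (-1)^(n + z(c))` and
`z(c) + z(σ) ≤ κ(σ, c) + n`. -/
lemma involution_facts (σ : Perm γ) (c : Perm γ) (hc : c * c = 1) :
    ((Perm.sign c : ℤˣ) : ℤ) = (-1) ^ (Fintype.card γ + zc c) ∧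
      zc c + zc σ ≤ kappa σ c + Fintype.card γ := by
  induction hk : Fintype.card γ - zc c using Nat.strong_induction_on generalizing c with
  | _ k ih =>
    by_cases h1 : c = 1
    · subst h1
      rw [zc_one, kappa_one]
      refine ⟨?_, by omega⟩
      simp [← two_mul]
    · obtain ⟨x, hx⟩ : ∃ x, c x ≠ x := by
        by_contra! h
        exact h1 (Perm.ext h)
      have hcc := apply_apply_of_sq hc
      -- `c₀` is `c` with the cycle `(x, c x)` removed.
      obtain ⟨c₀, hc₀⟩ : ∃ c₀, c₀ = c * swap x (c x) := ⟨_, rfl⟩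
      have e : c = c₀ * swap x (c x) := by rw [hc₀, mul_assoc, swap_mul_self, mul_one]
      have hx0 : c₀ x = x := by rw [hc₀, Perm.mul_apply, swap_apply_left, hcc]
      have hy0 : c₀ (c x) = c x := by rw [hc₀, Perm.mul_apply, swap_apply_right]
      have hsq : c₀ * c₀ = 1 := by
        ext a
        rw [Perm.mul_apply, Perm.one_apply]
        by_cases hax : a = x
        · rw [hax, hx0, hx0]
        by_cases hay : a = c x
        · rw [hay, hy0, hy0]
        have h2 : c₀ a = c a := by rw [hc₀, Perm.mul_apply, swap_apply_of_ne_of_ne hax hay]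
        have h3 : c a ≠ x := fun h => hay (by rw [← h, hcc])
        have h4 : c a ≠ c x := fun h => hax (c.injective h)
        rw [h2, hc₀, Perm.mul_apply, swap_apply_of_ne_of_ne h3 h4, hcc]
      have hz : zc c + 1 = zc c₀ := by
        have := zc_mul_swap c₀ hx0 hy0 hx.symm
        rwa [← e] at this
      have hκ : kappa σ c₀ ≤ kappa σ c + 1 := by
        have := kappa_mul_swap σ c₀ hx0 hy0
        rwa [← e] at this
      have hle := zc_le_card c₀
      obtain ⟨i1, i2⟩ := ih _ (by omega) c₀ hsq rfl
      refine ⟨?_, by omega⟩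
      have hs : Perm.sign c = - Perm.sign c₀ := by
        conv_lhs => rw [e]
        rw [Perm.sign_mul, Perm.sign_swap hx.symm, mul_neg_one]
      rw [hs, Units.val_neg, i1, ← hz, ← add_assoc, pow_succ]
      ring

lemma sameCycle_iff {α : Perm γ} (h : α * α = 1) (x y : γ) :
    α.SameCycle x y ↔ y = x ∨ y = α x := by
  constructor
  · rintro ⟨i, rfl⟩
    have h2 : ∀ k : ℤ, α ^ (2 * k) = 1 := fun k => by
      rw [zpow_mul, zpow_two, h, one_zpow]
    obtain ⟨k, rfl | rfl⟩ := Int.even_or_odd' i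
    · left; rw [h2]; rfl
    · right; rw [zpow_add, h2, one_mul, zpow_one]
  · rintro (rfl | rfl)
    · exact Perm.SameCycle.refl _ _
    · exact ⟨1, by simp⟩

lemma mk_eq_iff (π : Perm γ) (a b : γ) :
    Quotient.mk (MulAction.orbitRel (Subgroup.zpowers π) γ) a = Quotient.mk _ b ↔
      π.SameCycle a b := by
  rw [Quotient.eq, MulAction.orbitRel_apply]
  constructor
  · rintro ⟨⟨g, i, rfl⟩, h⟩
    exact Perm.SameCycle.symm ⟨i, h⟩
  · intro h
    obtain ⟨i, h⟩ := h.symm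
    exact ⟨⟨π ^ i, i, rfl⟩, h⟩

lemma zcOn_pair_of_sameCycle (π : Perm γ) {x y : γ} (h : π.SameCycle x y) :
    zcOn π {x, y} = 1 := by
  rw [zcOn, Set.image_pair, (mk_eq_iff π x y).2 h, Set.pair_eq_singleton, Set.ncard_singleton]

lemma zcOn_pair_of_fixed (π : Perm γ) {x y : γ} (hxy : x ≠ y) (hx : π x = x) :
    zcOn π {x, y} = 2 := by
  rw [zcOn, Set.image_pair, Set.ncard_pair]
  rw [Ne, mk_eq_iff]
  intro h
  exact hxy ((h.eq_of_left hx))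

/-- The refinements of an involution are obtained by deleting some of its `2`-cycles. -/
lemma isRefinement_iff {α : Perm γ} (h : α * α = 1) (β : Perm γ) :
    IsRefinement β α ↔ ∀ x, β x = x ∨ β x = α x := by
  have hαα := apply_apply_of_sq h
  simp only [IsRefinement, sameCycle_iff h]
  refine ⟨fun h => h.1, fun hβ => ⟨hβ, fun x => ?_⟩⟩
  have hset : cycleSet α x = {x, α x} := by
    ext y
    simp only [cycleSet, Set.mem_ofPred_eq, sameCycle_iff h, Set.mem_insert_iff,
      Set.mem_singleton_iff]
  rw [hset, Nat.card_coe_set_eq]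
  by_cases hx : α x = x
  · rw [hx, zcOn_pair_of_sameCycle _ (Perm.SameCycle.refl _ _),
      zcOn_pair_of_sameCycle _ (Perm.SameCycle.refl _ _)]
    simp
  · rw [Set.ncard_pair (Ne.symm hx)]
    rcases hβ x with h1 | h1
    · have h2 : β (α x) = α x := by
        rcases hβ (α x) with h2 | h2
        · exact h2
        · rw [hαα] at h2
          exact absurd (β.injective (h2.trans h1.symm)) hx
      rw [zcOn_pair_of_fixed _ (Ne.symm hx) h1, zcOn_pair_of_sameCycle]
      refine ⟨1, ?_⟩
      rw [zpow_one, Perm.mul_apply, Perm.inv_eq_iff_eq, h2]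
    · rw [zcOn_pair_of_sameCycle β ⟨1, by rw [zpow_one, h1]⟩,
        zcOn_pair_of_fixed _ (Ne.symm hx)]
      rw [Perm.mul_apply, Perm.inv_eq_iff_eq, h1]

lemma sq_of_isRefinement {α β : Perm γ} (h : α * α = 1) (hβ : ∀ x, β x = x ∨ β x = α x) :
    β * β = 1 := by
  ext x
  rw [Perm.mul_apply, Perm.one_apply]
  rcases hβ x with h1 | h1
  · rw [h1, h1]
  · rcases hβ (α x) with h2 | h2
    · have := β.injective (h1.trans h2.symm)
      rw [h1, h2, ← this]
    · rw [h1, h2, apply_apply_of_sq h]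

lemma mem_refInterval_iff {α : Perm γ} (h : α * α = 1) (β c : Perm γ) :
    c ∈ refInterval β α ↔
      (∀ x, β x = x ∨ β x = c x) ∧ ∀ x, c x = x ∨ c x = α x := by
  simp only [refInterval, Finset.mem_filter, Finset.mem_univ, true_and, isRefinement_iff h]
  constructor
  · rintro ⟨h1, h2⟩
    exact ⟨(isRefinement_iff (sq_of_isRefinement h h2) β).1 h1, h2⟩
  · rintro ⟨h1, h2⟩
    exact ⟨(isRefinement_iff (sq_of_isRefinement h h2) β).2 h1, h2⟩

lemma refInterval_one {α : Perm γ} (h : α * α = 1) :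
    refInterval 1 α = Finset.univ.filter (fun β => IsRefinement β α) := by
  ext c
  rw [mem_refInterval_iff h, Finset.mem_filter, isRefinement_iff h]
  simp

lemma zc_anti {α β : Perm γ} (hβ : ∀ x, β x = x ∨ β x = α x) : zc α ≤ zc β := by
  rw [zc_eq, zc_eq]
  refine orbitCount_le ?_
  rintro g rfl a
  rcases hβ a with h | h
  · rw [h]
  · rw [h]
    exact orbitSetoid_step (by simp) a

lemma kappa_anti (σ : Perm γ) {α β : Perm γ} (hβ : ∀ x, β x = x ∨ β x = α x) :
    kappa σ α ≤ kappa σ β := by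
  rw [kappa_eq, kappa_eq]
  refine orbitCount_le ?_
  rintro g (rfl | rfl) a
  · rcases hβ a with h | h
    · rw [h]
    · rw [h]
      exact orbitSetoid_step (by simp) a
  · exact orbitSetoid_step (by simp) a

/-! ### The Möbius function -/

/-- Multiplication by a `2`-cycle of `α` outside `β` preserves the interval `[β, α]`. -/
lemma mul_swap_mem {α β c : Perm γ} (h : α * α = 1) {x : γ} (hβx : β x = x)
    (hβy : β (α x) = α x) (hc : c ∈ refInterval β α) :
    c * swap x (α x) ∈ refInterval β α := by
  have hαα := apply_apply_of_sq h
  rw [mem_refInterval_iff h] at hc ⊢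
  obtain ⟨h1, h2⟩ := hc
  have hoff : ∀ a, a ≠ x → a ≠ α x → (c * swap x (α x)) a = c a := fun a ha hb => by
    rw [Perm.mul_apply, swap_apply_of_ne_of_ne ha hb]
  constructor
  · intro a
    by_cases hax : a = x
    · left; rw [hax, hβx]
    by_cases hay : a = α x
    · left; rw [hay, hβy]
    rw [hoff a hax hay]
    exact h1 a
  · intro a
    by_cases hax : a = x
    · rw [hax, Perm.mul_apply, swap_apply_left]
      have := h2 (α x)
      rw [hαα] at this
      exact this.symm
    by_cases hay : a = α x
    · rw [hay, Perm.mul_apply, swap_apply_right, hαα]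
      exact (h2 x).symm
    rw [hoff a hax hay]
    exact h2 a

lemma sum_sign_interval {α β : Perm γ} (h : α * α = 1) (hβ : ∀ x, β x = x ∨ β x = α x)
    (hne : β ≠ α) :
    ∑ c ∈ refInterval β α, ((Perm.sign c : ℤˣ) : ℤ) = 0 := by
  obtain ⟨x, hx⟩ : ∃ x, β x ≠ α x := by
    by_contra! h'
    exact hne (Perm.ext h')
  have hβx : β x = x := (hβ x).resolve_right hx
  have hxy : x ≠ α x := fun e => hx (hβx.trans e)
  have hβy : β (α x) = α x := by
    rcases hβ (α x) with h2 | h2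
    · exact h2
    · rw [apply_apply_of_sq h] at h2
      exact absurd (β.injective (hβx.trans h2.symm)) hxy
  refine Finset.sum_involution (fun c _ => c * swap x (α x)) ?_ ?_ ?_ ?_
  · intro c _
    rw [Perm.sign_mul, Perm.sign_swap hxy]
    simp
  · intro c _ _ e
    have := mul_eq_left.1 e
    rw [swap_eq_one_iff] at this
    exact hxy this
  · intro c hc
    exact mul_swap_mem h hβx hβy hc
  · intro c _
    rw [mul_assoc, swap_mul_self, mul_one]

lemma mu_eq_sign {mu : Perm γ → Perm γ → ℤ} (hmu : IsMobius mu) (β α : Perm γ)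
    (h : α * α = 1) (hβ : ∀ x, β x = x ∨ β x = α x) :
    mu β α = ((Perm.sign β : ℤˣ) : ℤ) * ((Perm.sign α : ℤˣ) : ℤ) := by
  induction hk : α.support.card using Nat.strong_induction_on generalizing α with
  | _ k ih =>
    have hrec := hmu β α ((isRefinement_iff h β).2 hβ)
    have hmem : α ∈ refInterval β α := (mem_refInterval_iff h β α).2 ⟨hβ, fun x => Or.inr rfl⟩
    have hsum : ∑ c ∈ refInterval β α, ((Perm.sign β : ℤˣ) : ℤ) * ((Perm.sign c : ℤˣ) : ℤ) =
        if β = α then 1 else 0 := by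
      split_ifs with e
      · subst e
        have : refInterval β β = {β} := by
          ext c
          rw [mem_refInterval_iff h, Finset.mem_singleton]
          constructor
          · rintro ⟨h1, h2⟩
            ext a
            rcases h1 a with h1 | h1
            · rcases h2 a with h2 | h2
              · rw [h1, h2]
              · exact h2
            · exact h1.symm
          · rintro rfl
            exact ⟨fun _ => Or.inr rfl, fun _ => Or.inr rfl⟩
        rw [this, Finset.sum_singleton, ← Units.val_mul, Int.units_mul_self, Units.val_one]
      · rw [← Finset.mul_sum, sum_sign_interval h hβ e, mul_zero]
    rw [← Finset.add_sum_erase _ _ hmem] at hrec hsum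
    have hrest : ∑ c ∈ (refInterval β α).erase α, mu β c =
        ∑ c ∈ (refInterval β α).erase α, ((Perm.sign β : ℤˣ) : ℤ) * ((Perm.sign c : ℤˣ) : ℤ) := by
      refine Finset.sum_congr rfl fun c hc => ?_
      rw [Finset.mem_erase, mem_refInterval_iff h] at hc
      obtain ⟨hne, h1, h2⟩ := hc
      refine ih c.support.card ?_ c (sq_of_isRefinement h h2) h1 rfl
      rw [← hk]
      refine Finset.card_lt_card ((Finset.ssubset_iff_of_subset ?_).2 ?_)
      · intro a ha
        rw [Perm.mem_support] at ha ⊢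
        rwa [← (h2 a).resolve_left ha]
      · obtain ⟨x, hx⟩ : ∃ x, c x ≠ α x := by
          by_contra! h'
          exact hne (Perm.ext h')
        have hcx := (h2 x).resolve_right hx
        refine ⟨x, ?_, ?_⟩
        · rw [Perm.mem_support]
          exact fun e => hx (hcx.trans e.symm)
        · rw [Perm.notMem_support]
          exact hcx
    rw [hrest] at hrec
    linarith

lemma neg_one_pow_congr {a b : ℕ} (h : a % 2 = b % 2) : (-1 : ℤ) ^ a = (-1) ^ b := by
  rw [neg_one_pow_eq_pow_mod_two, h, ← neg_one_pow_eq_pow_mod_two]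

lemma mu_one_eq {mu : Perm γ → Perm γ → ℤ} (hmu : IsMobius mu) {β : Perm γ} (h : β * β = 1) :
    mu 1 β = (-1 : ℤ) ^ (Fintype.card γ - zc β) := by
  rw [mu_eq_sign hmu 1 β h fun x => Or.inl rfl, (involution_facts β β h).1, Perm.sign_one,
    Units.val_one, one_mul]
  have := zc_le_card β
  exact neg_one_pow_congr (by omega)

end Hypermap

open Hypermap in
/-- for a collection of maps (every cycle of `α` of length at
most `2`, i.e. `α` an involution), the Möbius function of the refinement poset
satisfies `μ(β,α) = (−1)^{z(β)−z(α)}` for every `β ≤ α`, and the characteristic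
polynomial `χ(σ,α;t) = Σ_{β≤α} μ(id,β)·t^{κ(σ,β)−κ(σ,α)}` satisfies
`χ(σ,α;t) = Σ_{β≤α} (−1)^{n−z(β)}·t^{κ(σ,β)−κ(σ,α)}` and
`χ(σ,α;t) = (−1)^{z(σ)−κ(σ,α)}·R(σ,α;−t,−1)`. -/
theorem characteristic_polynomial_of_maps
    {γ : Type*} [Fintype γ] [DecidableEq γ] (σ α : Equiv.Perm γ)
    (hmap : α * α = 1)
    (mu : Equiv.Perm γ → Equiv.Perm γ → ℤ) (hmu : IsMobius mu) :
    (∀ β : Equiv.Perm γ, IsRefinement β α → mu β α = (-1 : ℤ) ^ (zc β - zc α)) ∧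
    ∀ t : ℤ,
      (∑ β ∈ refInterval 1 α, mu 1 β * t ^ (kappa σ β - kappa σ α) =
        ∑ β ∈ refInterval 1 α,
          (-1 : ℤ) ^ (Fintype.card γ - zc β) * t ^ (kappa σ β - kappa σ α)) ∧
      (∑ β ∈ refInterval 1 α, mu 1 β * t ^ (kappa σ β - kappa σ α) =
        (-1 : ℤ) ^ (zc σ - kappa σ α) * whitney σ α (-t) (-1 : ℤ)) := by
  refine ⟨fun β hβ => ?_, fun t => ⟨?_, ?_⟩⟩
  · rw [isRefinement_iff hmap] at hβ
    rw [mu_eq_sign hmu β α hmap hβ, (involution_facts σ α hmap).1,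
      (involution_facts σ β (sq_of_isRefinement hmap hβ)).1, ← pow_add]
    have := zc_anti hβ
    exact neg_one_pow_congr (by omega)
  · refine Finset.sum_congr rfl fun β hβ => ?_
    rw [mem_refInterval_iff hmap] at hβ
    rw [mu_one_eq hmu (sq_of_isRefinement hmap hβ.2)]
  · rw [whitney, ← refInterval_one hmap, Finset.mul_sum]
    refine Finset.sum_congr rfl fun β hβ => ?_
    rw [mem_refInterval_iff hmap] at hβ
    have hsq := sq_of_isRefinement hmap hβ.2
    rw [mu_one_eq hmu hsq, neg_pow t]
    have h1 := zc_le_card β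
    have h2 := kappa_anti σ hβ.2
    have h3 := kappa_le_zc σ α
    have h4 := (involution_facts σ β hsq).2
    have e : (-1 : ℤ) ^ (Fintype.card γ - zc β) =
        (-1) ^ ((zc σ - kappa σ α) + (kappa σ β - kappa σ α) +
          (kappa σ β + Fintype.card γ - zc β - zc σ)) := neg_one_pow_congr (by omega)
    rw [e, pow_add, pow_add]
    ring
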